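/- arXiv:1511.07579 — 4 statements merged into one kernel-verified Lean document; each statement's English description precedes it below -/
import Mathlib

section
/- Let ψ₁, ψ₂, φ̂₁, φ̂₂ : ℝ² → 𝒜 be conformal maps (i.e. ∂_â ψ₁ = ∂_â ψ₂ = ∂_â φ̂₁ = ∂_â φ̂₂ = 0), and let F = (F₀, F₁, F₂, F₃) : ℝ² → ℝ⁴ be C² with differential prescribed by the Weierstrass integrands: for X = (X₁, X₂) ∈ ℝ² and z := X₁ + σX₂, dF₀(X) = Re((−ψ₁φ̂₁ + ψ₂φ̂₂)·z), dF₁(X) = Re((−ψ₁φ̂₁ − ψ₂φ̂₂)·z), dF₂(X) = Re((ψ₂φ̂₁ + ψ₁φ̂₂)·z), dF₃(X) = Im((−ψ₂φ̂₁ + ψ₁φ̂₂)·z). Then F satisfies the conformality relations ⟨∂_u F, ∂_v F⟩ = 0, −⟨∂_u F, ∂_u F⟩ = ⟨∂_v F, ∂_v F⟩ = |ψ₂φ₁ − ψ₁φ₂|², and the wave equation −∂²F/∂u² + ∂²F/∂v² = 0; hence wherever |ψ₂φ₁ − ψ₁φ₂|² ≠ 0, F is a conformal minimal immersion of a Lorentz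 surface into ℝ^{2,2}. -/
noncomputable section

/-! ### The algebra `𝒜` of Lorentz (split-complex) numbers.

We realize `𝒜` (the real algebra with basis `{1, σ}`, `σ² = 1`) in split coordinates:
`(x, y) : ℝ × ℝ` represents `u + σ v` with `x = u + v`, `y = u - v`.  Multiplication is then
componentwise, `1 = (1,1)`, and `σ = (1, -1)` satisfies `σ² = 1`. -/

abbrev LorentzA : Type := ℝ × ℝ

/-- The element `σ ∈ 𝒜`, with `σ² = 1`, `σ ∉ ℝ·1`. -/
def sA : LorentzA := (1, -1)

/-- The element `u + σ v` of `𝒜`. -/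
def mkA (u v : ℝ) : LorentzA := (u + v, u - v)

/-- The inclusion `ℝ ⊆ 𝒜`, `t ↦ t·1`. -/
def toA (t : ℝ) : LorentzA := (t, t)

/-- Conjugation of `𝒜`: `u + σ v ↦ u - σ v` (the swap, in split coordinates). -/
def conjA (a : LorentzA) : LorentzA := (a.2, a.1)

/-- `|a|² := a·â = u² - v²`, as a real number (so that `a * conjA a = toA (nsqA a)`). -/
def nsqA (a : LorentzA) : ℝ := a.1 * a.2

/-- The real part of `a = u + σ v ∈ 𝒜`, namely `u`. -/
def ReA (a : LorentzA) : ℝ := (a.1 + a.2) / 2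

/-- The imaginary part of `a = u + σ v ∈ 𝒜`, namely `v`. -/
def ImA (a : LorentzA) : ℝ := (a.1 - a.2) / 2

/-- The idempotent `(1 + σ)/2` of `𝒜`. -/
def eP : LorentzA := (1 + sA) / 2

/-- The idempotent `(1 - σ)/2` of `𝒜`. -/
def eM : LorentzA := (1 - sA) / 2

/-! ### Derivatives of maps `ℝ² → 𝒜` and `ℝ² → ℝ`. -/

/-- `∂_u f`. -/
def duA (f : ℝ × ℝ → LorentzA) (x : ℝ × ℝ) : LorentzA := fderiv ℝ f x (1, 0)

/-- `∂_v f`. -/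
def dvA (f : ℝ × ℝ → LorentzA) (x : ℝ × ℝ) : LorentzA := fderiv ℝ f x (0, 1)

/-- `∂_a f = ½ (∂_u f + σ ∂_v f)`. -/
def Da (f : ℝ × ℝ → LorentzA) (x : ℝ × ℝ) : LorentzA := ((2:ℝ)⁻¹) • (duA f x + sA * dvA f x)

/-- `∂_â f = ½ (∂_u f - σ ∂_v f)`.  A map is conformal iff `∂_â f = 0`. -/
def Dahat (f : ℝ × ℝ → LorentzA) (x : ℝ × ℝ) : LorentzA := ((2:ℝ)⁻¹) • (duA f x - sA * dvA f x)

/-- `∂_u f` for real-valued `f`. -/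
def duR (f : ℝ × ℝ → ℝ) (x : ℝ × ℝ) : ℝ := fderiv ℝ f x (1, 0)

/-- `∂_v f` for real-valued `f`. -/
def dvR (f : ℝ × ℝ → ℝ) (x : ℝ × ℝ) : ℝ := fderiv ℝ f x (0, 1)

/-- `∂²f/∂u²`. -/
def duuR (f : ℝ × ℝ → ℝ) (x : ℝ × ℝ) : ℝ := fderiv ℝ (fun y => fderiv ℝ f y (1, 0)) x (1, 0)

/-- `∂²f/∂v²`. -/
def dvvR (f : ℝ × ℝ → ℝ) (x : ℝ × ℝ) : ℝ := fderiv ℝ (fun y => fderiv ℝ f y (0, 1)) x (0, 1)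

/-- The wave operator `□ f = -∂²f/∂u² + ∂²f/∂v²`. -/
def boxR (f : ℝ × ℝ → ℝ) (x : ℝ × ℝ) : ℝ := -duuR f x + dvvR f x

/-! ### 2×2 matrices over `𝒜`. -/

abbrev M2A := Matrix (Fin 2) (Fin 2) LorentzA

/-- The conjugate transpose `B*` of `B ∈ M₂(𝒜)`. -/
def ctrans (B : M2A) : M2A := (B.map conjA).transpose

/-- `Herm₂(𝒜) = {B ∈ M₂(𝒜) : B = B*}`. -/
def Herm2 : Set M2A := {B | B = ctrans B}

/-- `SL₂(𝒜) = {B ∈ M₂(𝒜) : det B = 1}`. -/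
def SL2A : Set M2A := {B | B.det = 1}

/-- The inclusion `M₂(ℝ) ⊆ M₂(𝒜)`. -/
def mR (C : Matrix (Fin 2) (Fin 2) ℝ) : M2A := C.map toA

/-! ### The complexified Lorentz numbers `𝒜_ℂ = 𝒜 ⊗ ℂ ≅ ℂ × ℂ` (split coordinates),
and the quaternions `ℍ^{𝒜_ℂ}` with coefficients in `𝒜_ℂ`. -/

abbrev AC : Type := ℂ × ℂ

/-- `σ ∈ 𝒜_ℂ`. -/
def sC : AC := (1, -1)

/-- The complex unit `i ∈ 𝒜_ℂ`. -/
def iC : AC := (Complex.I, Complex.I)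

/-- Conjugation `u + σ v ↦ u - σ v` (`u, v ∈ ℂ`) of `𝒜_ℂ`. -/
def hatC (z : AC) : AC := (z.2, z.1)

/-- The inclusion `ℝ ⊆ 𝒜_ℂ`. -/
def rc (t : ℝ) : AC := ((t : ℂ), (t : ℂ))

/-- The inclusion `𝒜 ⊆ 𝒜_ℂ`. -/
def toAC (a : LorentzA) : AC := ((a.1 : ℂ), (a.2 : ℂ))

/-- `a ↦ i·a`, the image of `𝒜` in `i·𝒜 ⊆ 𝒜_ℂ`. -/
def iAC (a : LorentzA) : AC := (Complex.I * a.1, Complex.I * a.2)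

/-- `ℍ^{𝒜_ℂ}`: quaternions `ζ₀·1 + ζ₁·I + ζ₂·J + ζ₃·K` with `ζᵢ ∈ 𝒜_ℂ`,
`I² = J² = K² = -1`, `IJ = -JI = K`. -/
abbrev HAC := Quaternion AC

/-- The scalar quaternion `z·1`. -/
def qscalar (z : AC) : HAC := ⟨z, 0, 0, 0⟩

/-- The quaternion unit `I`. -/
def qI : HAC := ⟨0, 1, 0, 0⟩

/-- The quaternion unit `J`. -/
def qJ : HAC := ⟨0, 0, 1, 0⟩

/-- The quaternion unit `K`. -/
def qK : HAC := ⟨0, 0, 0, 1⟩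

/-- `ζ̂`: apply `𝒜_ℂ`-conjugation to each coefficient of a quaternion.
(Quaternionic conjugation `ζ̄` is `star ζ`.) -/
def qhat (q : HAC) : HAC := ⟨hatC q.re, hatC q.imI, hatC q.imJ, hatC q.imK⟩

/-- `H(ζ, ζ') = ½(ζ ζ̄' + ζ' ζ̄) = ζ₀ζ₀' + ζ₁ζ₁' + ζ₂ζ₂' + ζ₃ζ₃' ∈ 𝒜_ℂ`. -/
def Hform (q q' : HAC) : AC := q.re * q'.re + q.imI * q'.imI + q.imJ * q'.imJ + q.imK * q'.imK

/-- `p₀·1 + i p₁·I + p₂·J + i p₃·K` with `pᵢ ∈ 𝒜`: the generic element of `ℍ₀`. -/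
def mk0 (p₀ p₁ p₂ p₃ : LorentzA) : HAC :=
  qscalar (toAC p₀) + qscalar (iAC p₁) * qI + qscalar (toAC p₂) * qJ + qscalar (iAC p₃) * qK

/-- `i q₀·1 + q₁·I + i q₂·J + q₃·K` with `qᵢ ∈ 𝒜`: the generic element of `ℍ₁`. -/
def mk1 (q₀ q₁ q₂ q₃ : LorentzA) : HAC :=
  qscalar (iAC q₀) + qscalar (toAC q₁) * qI + qscalar (iAC q₂) * qJ + qscalar (toAC q₃) * qK

/-- `ℍ₀ = {p₀·1 + i p₁·I + p₂·J + i p₃·K : pᵢ ∈ 𝒜} ⊆ ℍ^{𝒜_ℂ}`. -/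
def H0set : Set HAC := {ζ | ∃ p₀ p₁ p₂ p₃ : LorentzA, ζ = mk0 p₀ p₁ p₂ p₃}

/-- `ℍ₁ = {i q₀·1 + q₁·I + i q₂·J + q₃·K : qᵢ ∈ 𝒜} ⊆ ℍ^{𝒜_ℂ}`. -/
def H1set : Set HAC := {ζ | ∃ q₀ q₁ q₂ q₃ : LorentzA, ζ = mk1 q₀ q₁ q₂ q₃}

/-- `Spin(2,2) = {p ∈ ℍ₀ : H(p,p) = 1}`. -/
def SpinSet : Set HAC := {p | p ∈ H0set ∧ Hform p p = 1}

/-- Extraction of the `𝒜`-coefficient of an element of `𝒜 ⊆ 𝒜_ℂ`. -/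
def reEx (z : AC) : LorentzA := (z.1.re, z.2.re)

/-- Extraction of the `𝒜`-coefficient of an element of `i·𝒜 ⊆ 𝒜_ℂ`. -/
def imEx (z : AC) : LorentzA := (z.1.im, z.2.im)

/-- The map `A₀ : ℍ₀ → M₂(𝒜)`,
`p₀·1 + i p₁·I + p₂·J + i p₃·K ↦ [[p₀ - σp₁, p₂ - σp₃], [-p₂ - σp₃, p₀ + σp₁]]`
(written via coefficient extraction, so that it is a total function on `ℍ^{𝒜_ℂ}`
agreeing with `A₀` on `ℍ₀`). -/
def A0 (ζ : HAC) : M2A :=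
  !![reEx ζ.re - sA * imEx ζ.imI, reEx ζ.imJ - sA * imEx ζ.imK;
     -reEx ζ.imJ - sA * imEx ζ.imK, reEx ζ.re + sA * imEx ζ.imI]

/-- The map `A₁ : ℍ₁ → M₂(𝒜)`,
`i q₀·1 + q₁·I + i q₂·J + q₃·K ↦ [[-q₁ - σq₀, -q₃ - σq₂], [-q₃ + σq₂, q₁ - σq₀]]`. -/
def A1 (ζ : HAC) : M2A :=
  !![-reEx ζ.imI - sA * imEx ζ.re, -reEx ζ.imK - sA * imEx ζ.imJ;
     -reEx ζ.imK + sA * imEx ζ.imJ, reEx ζ.imI - sA * imEx ζ.re]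
/-- Differentiable and conformal. -/
def ConfA (g : ℝ × ℝ → LorentzA) : Prop :=
  Differentiable ℝ g ∧ ∀ x, fderiv ℝ g x (1, 0) = sA * fderiv ℝ g x (0, 1)

lemma ConfA.of {g : ℝ × ℝ → LorentzA} (h : ContDiff ℝ 1 g) (hc : ∀ x, Dahat g x = 0) :
    ConfA g := by
  refine ⟨h.differentiable (by norm_num), fun x => ?_⟩
  have := hc x
  unfold Dahat duA dvA at this
  rw [smul_eq_zero] at this
  rcases this with h | h
  · norm_num at h
  · exact sub_eq_zero.mp h

lemma ConfA.mul {f g : ℝ × ℝ → LorentzA} (hf : ConfA f) (hg : ConfA g) :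
    ConfA (fun x => f x * g x) := by
  refine ⟨hf.1.mul hg.1, fun x => ?_⟩
  have e : fderiv ℝ (fun x => f x * g x) x = f x • fderiv ℝ g x + g x • fderiv ℝ f x :=
    fderiv_fun_mul (hf.1 x) (hg.1 x)
  rw [e]
  simp only [ContinuousLinearMap.add_apply, ContinuousLinearMap.smul_apply, smul_eq_mul,
    hf.2 x, hg.2 x]
  ring

lemma ConfA.neg {f : ℝ × ℝ → LorentzA} (hf : ConfA f) : ConfA (fun x => - f x) := by
  refine ⟨hf.1.neg, fun x => ?_⟩
  rw [fderiv_fun_neg]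
  simp only [ContinuousLinearMap.neg_apply, hf.2 x]
  ring

lemma ConfA.add {f g : ℝ × ℝ → LorentzA} (hf : ConfA f) (hg : ConfA g) :
    ConfA (fun x => f x + g x) := by
  refine ⟨hf.1.add hg.1, fun x => ?_⟩
  rw [fderiv_fun_add (hf.1 x) (hg.1 x)]
  simp only [ContinuousLinearMap.add_apply, hf.2 x, hg.2 x]
  ring

lemma ConfA.sub {f g : ℝ × ℝ → LorentzA} (hf : ConfA f) (hg : ConfA g) :
    ConfA (fun x => f x - g x) := by
  simpa only [sub_eq_add_neg] using hf.add hg.neg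

lemma fderiv_combo {g : ℝ × ℝ → LorentzA} (hg : Differentiable ℝ g) (c : ℝ) (x X : ℝ × ℝ) :
    fderiv ℝ (fun y => ((g y).1 + c * (g y).2) / 2) x X =
      ((fderiv ℝ g x X).1 + c * (fderiv ℝ g x X).2) / 2 := by
  have h := (hg x).hasFDerivAt
  have h1 : HasFDerivAt (fun y => (g y).1) _ x := h.fst
  have h2 : HasFDerivAt (fun y => (g y).2) _ x := h.snd
  have h3 := (h1.add (h2.const_mul c)).mul_const (2⁻¹ : ℝ)
  have h4 : HasFDerivAt (fun y => ((g y).1 + c * (g y).2) / 2) _ x := h3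
  rw [h4.fderiv]
  simp
  ring

lemma ConfA.box_aux {g : ℝ × ℝ → LorentzA} (hg : ConfA g) (F : ℝ × ℝ → ℝ) (c : ℝ)
    (hF : ∀ x X, fderiv ℝ F x X = ((g x * mkA X.1 X.2).1 + c * (g x * mkA X.1 X.2).2) / 2)
    (x : ℝ × ℝ) : boxR F x = 0 := by
  have e1 : (fun y => fderiv ℝ F y (1, 0)) = fun y => ((g y).1 + c * (g y).2) / 2 := by
    funext y; rw [hF]; simp [mkA]
  have e2 : (fun y => fderiv ℝ F y (0, 1)) = fun y => ((g y).1 + (-c) * (g y).2) / 2 := by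
    funext y; rw [hF]; simp [mkA]
  unfold boxR duuR dvvR
  rw [e1, e2, fderiv_combo hg.1, fderiv_combo hg.1, hg.2 x]
  simp [sA]

lemma ConfA.box_re {g : ℝ × ℝ → LorentzA} (hg : ConfA g) (F : ℝ × ℝ → ℝ)
    (hF : ∀ x X : ℝ × ℝ, fderiv ℝ F x X = ReA (g x * mkA X.1 X.2))
    (x : ℝ × ℝ) : boxR F x = 0 :=
  hg.box_aux F 1 (fun x X => by rw [hF]; unfold ReA; ring) x

lemma ConfA.box_im {g : ℝ × ℝ → LorentzA} (hg : ConfA g) (F : ℝ × ℝ → ℝ)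
    (hF : ∀ x X : ℝ × ℝ, fderiv ℝ F x X = ImA (g x * mkA X.1 X.2))
    (x : ℝ × ℝ) : boxR F x = 0 :=
  hg.box_aux F (-1) (fun x X => by rw [hF]; unfold ImA; ring) x

/-- Weierstrass representation of minimal Lorentzian surfaces in `ℝ^{2,2}`:
if `ψ₁, ψ₂, φ̂₁, φ̂₂ : ℝ² → 𝒜` are conformal (`∂_â` vanishes) and the differential of the `C²`
map `F = (F₀,F₁,F₂,F₃)` is prescribed by the minimal Weierstrass integrands, then `F`
satisfies the conformality relations (with `φ_α` the conjugate of `φ̂_α`) and the wave equation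
`-∂²F/∂u² + ∂²F/∂v² = 0`; wherever `|ψ₂φ₁ - ψ₁φ₂|² ≠ 0` the differential is injective, so `F`
is a conformal minimal immersion into `ℝ^{2,2}`. -/
theorem stmt14 (ψ₁ ψ₂ φh₁ φh₂ : ℝ × ℝ → LorentzA) (F₀ F₁ F₂ F₃ : ℝ × ℝ → ℝ)
    (hψ₁ : ContDiff ℝ 1 ψ₁) (hψ₂ : ContDiff ℝ 1 ψ₂)
    (hφh₁ : ContDiff ℝ 1 φh₁) (hφh₂ : ContDiff ℝ 1 φh₂)
    (hc₁ : ∀ x, Dahat ψ₁ x = 0) (hc₂ : ∀ x, Dahat ψ₂ x = 0)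
    (hc₃ : ∀ x, Dahat φh₁ x = 0) (hc₄ : ∀ x, Dahat φh₂ x = 0)
    (hF₀ : ContDiff ℝ 2 F₀) (hF₁ : ContDiff ℝ 2 F₁)
    (hF₂ : ContDiff ℝ 2 F₂) (hF₃ : ContDiff ℝ 2 F₃)
    (hW0 : ∀ x X : ℝ × ℝ, fderiv ℝ F₀ x X =
      ReA ((-(ψ₁ x * φh₁ x) + ψ₂ x * φh₂ x) * mkA X.1 X.2))
    (hW1 : ∀ x X : ℝ × ℝ, fderiv ℝ F₁ x X =
      ReA ((-(ψ₁ x * φh₁ x) - ψ₂ x * φh₂ x) * mkA X.1 X.2))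
    (hW2 : ∀ x X : ℝ × ℝ, fderiv ℝ F₂ x X =
      ReA ((ψ₂ x * φh₁ x + ψ₁ x * φh₂ x) * mkA X.1 X.2))
    (hW3 : ∀ x X : ℝ × ℝ, fderiv ℝ F₃ x X =
      ImA ((-(ψ₂ x * φh₁ x) + ψ₁ x * φh₂ x) * mkA X.1 X.2)) :
    ∀ x : ℝ × ℝ,
      (-(duR F₀ x * dvR F₀ x) + duR F₁ x * dvR F₁ x - duR F₂ x * dvR F₂ x +
        duR F₃ x * dvR F₃ x = 0) ∧
      (-(-(duR F₀ x) ^ 2 + (duR F₁ x) ^ 2 - (duR F₂ x) ^ 2 + (duR F₃ x) ^ 2) =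
        nsqA (ψ₂ x * conjA (φh₁ x) - ψ₁ x * conjA (φh₂ x))) ∧
      (-(dvR F₀ x) ^ 2 + (dvR F₁ x) ^ 2 - (dvR F₂ x) ^ 2 + (dvR F₃ x) ^ 2 =
        nsqA (ψ₂ x * conjA (φh₁ x) - ψ₁ x * conjA (φh₂ x))) ∧
      (boxR F₀ x = 0 ∧ boxR F₁ x = 0 ∧ boxR F₂ x = 0 ∧ boxR F₃ x = 0) ∧
      (nsqA (ψ₂ x * conjA (φh₁ x) - ψ₁ x * conjA (φh₂ x)) ≠ 0 →
        Function.Injective fun X : ℝ × ℝ =>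
          (fderiv ℝ F₀ x X, fderiv ℝ F₁ x X, fderiv ℝ F₂ x X, fderiv ℝ F₃ x X)) := by
  have k₁ := ConfA.of hψ₁ hc₁
  have k₂ := ConfA.of hψ₂ hc₂
  have k₃ := ConfA.of hφh₁ hc₃
  have k₄ := ConfA.of hφh₂ hc₄
  intro x
  refine ⟨?_, ?_, ?_, ⟨?_, ?_, ?_, ?_⟩, ?_⟩
  · simp only [duR, dvR, hW0, hW1, hW2, hW3, ReA, ImA, mkA, Prod.fst_mul, Prod.snd_mul,
      Prod.fst_add, Prod.snd_add, Prod.fst_sub, Prod.snd_sub, Prod.fst_neg, Prod.snd_neg]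
    ring
  · simp only [duR, dvR, hW0, hW1, hW2, hW3, ReA, ImA, mkA, nsqA, conjA, Prod.fst_mul,
      Prod.snd_mul,
      Prod.fst_add, Prod.snd_add, Prod.fst_sub, Prod.snd_sub, Prod.fst_neg, Prod.snd_neg]
    ring
  · simp only [duR, dvR, hW0, hW1, hW2, hW3, ReA, ImA, mkA, nsqA, conjA, Prod.fst_mul,
      Prod.snd_mul,
      Prod.fst_add, Prod.snd_add, Prod.fst_sub, Prod.snd_sub, Prod.fst_neg, Prod.snd_neg]
    ring
  · exact ((k₁.mul k₃).neg.add (k₂.mul k₄)).box_re F₀ hW0 x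
  · exact ((k₁.mul k₃).neg.sub (k₂.mul k₄)).box_re F₁ hW1 x
  · exact ((k₂.mul k₃).add (k₁.mul k₄)).box_re F₂ hW2 x
  · exact ((k₂.mul k₃).neg.add (k₁.mul k₄)).box_im F₃ hW3 x
  · intro hN X Y hXY
    simp only [Prod.mk.injEq] at hXY
    obtain ⟨h0, h1, h2, h3⟩ := hXY
    simp only [hW0, hW1, hW2, hW3, ReA, ImA, mkA, Prod.fst_mul, Prod.snd_mul,
      Prod.fst_add, Prod.snd_add, Prod.fst_sub, Prod.snd_sub, Prod.fst_neg, Prod.snd_neg]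
      at h0 h1 h2 h3
    simp only [nsqA, conjA, Prod.fst_mul, Prod.snd_mul, Prod.fst_sub, Prod.snd_sub] at hN
    obtain ⟨X1, X2⟩ := X
    obtain ⟨Y1, Y2⟩ := Y
    generalize ψ₁ x = a at *
    generalize ψ₂ x = b at *
    generalize φh₁ x = c at *
    generalize φh₂ x = d at *
    obtain ⟨a1, a2⟩ := a
    obtain ⟨b1, b2⟩ := b
    obtain ⟨c1, c2⟩ := c
    obtain ⟨d1, d2⟩ := d
    simp only at h0 h1 h2 h3 hN
    have hs : (X1 + X2) - (Y1 + Y2) = 0 := by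
      apply (mul_eq_zero.mp _).resolve_left hN
      linear_combination (-a2*c2+b2*d2) * h0 - (-a2*c2-b2*d2) * h1 + (b2*c2+a2*d2) * h2
        + (-b2*c2+a2*d2) * h3
    have ht : (X1 - X2) - (Y1 - Y2) = 0 := by
      apply (mul_eq_zero.mp _).resolve_left hN
      linear_combination (-a1*c1+b1*d1) * h0 - (-a1*c1-b1*d1) * h1 + (b1*c1+a1*d1) * h2
        - (-b1*c1+a1*d1) * h3
    ext
    · simp only; linarith
    · simp only; linarith
end
end

section
/- Let U ⊆ ℝ² be open and B : U → SL₂(𝒜) a C¹ map such that B⁻¹·∂_u B = [[0, θ₀], [ω₀, 0]] and B⁻¹·∂_v B = [[0, σθ₀], [σω₀, 0]] for conformal maps θ₀, ω₀ : U → 𝒜 (i.e. ∂_â θ₀ = ∂_â ω₀ = 0), so that B⁻¹dB = [[0, θ], [ω, 0]] with the conformal 1-forms θ = θ₀·da, ω = ω₀·da. Then F := B·B* satisfies: (i) F = F* and det F = 1, i.e. F takes values in the Anti-de Sitter space ℍ^{2,1} ≅ {C ∈ Herm₂(𝒜) : det C = 1}; (ii) for every X = (X₁, X₂) ∈ ℝ²,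 with z := X₁ + σX₂, one has dF(X) = B·[[0, θ₀z + ω̂₀ẑ], [ω₀z + θ̂₀ẑ, 0]]·B* and −det(dF(X)) = |θ₀z + ω̂₀ẑ|² (the induced metric g = (θ + ω̄)(ω + θ̄)); (iii) at each point where |θ₀|² ≠ |ω₀|², the quadratic form X ↦ −det(dF(X)) on ℝ² is nondegenerate of signature (1,1), so F is a Lorentzian isometric immersion into ℍ^{2,1} there. -/
noncomputable section

/-- The directional derivative `dF_x(X)` of a matrix-valued map, taken entrywise. -/
def dMat (Fm : ℝ × ℝ → M2A) (x X : ℝ × ℝ) : M2A :=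
  Matrix.of fun i j => fderiv ℝ (fun y => Fm y i j) x X


lemma conjA_mul (a b : LorentzA) : conjA (a * b) = conjA a * conjA b := rfl
lemma conjA_add (a b : LorentzA) : conjA (a + b) = conjA a + conjA b := rfl
lemma conjA_conjA (a : LorentzA) : conjA (conjA a) = a := rfl

lemma ctrans_mul (P Q : M2A) : ctrans (P * Q) = ctrans Q * ctrans P := by
  ext i j <;>
  simp [ctrans, Matrix.mul_apply, Fin.sum_univ_two, conjA, mul_comm]

lemma ctrans_ctrans (P : M2A) : ctrans (ctrans P) = P := by
  ext i j <;> simp [ctrans, conjA]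

lemma det_ctrans (P : M2A) : (ctrans P).det = conjA P.det := by
  ext <;> simp [ctrans, Matrix.det_fin_two, conjA, mul_comm]

lemma hasFDerivAt_conjA {g : ℝ × ℝ → LorentzA} {x : ℝ × ℝ} (hg : DifferentiableAt ℝ g x) :
    HasFDerivAt (fun y => conjA (g y))
      ((ContinuousLinearEquiv.prodComm ℝ ℝ ℝ : LorentzA →L[ℝ] LorentzA).comp (fderiv ℝ g x)) x :=
  (ContinuousLinearEquiv.prodComm ℝ ℝ ℝ : LorentzA →L[ℝ] LorentzA).hasFDerivAt.comp x
    hg.hasFDerivAt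

lemma fderiv_mul_conjA {f g : ℝ × ℝ → LorentzA} {x : ℝ × ℝ} (hf : DifferentiableAt ℝ f x)
    (hg : DifferentiableAt ℝ g x) :
    HasFDerivAt (fun y => f y * conjA (g y))
      (f x • ((ContinuousLinearEquiv.prodComm ℝ ℝ ℝ : LorentzA →L[ℝ] LorentzA).comp (fderiv ℝ g x))
        + conjA (g x) • fderiv ℝ f x) x :=
  hf.hasFDerivAt.mul (hasFDerivAt_conjA hg)

lemma dMat_mul_ctrans {B : ℝ × ℝ → M2A} {x : ℝ × ℝ}
    (hB : ∀ i j, DifferentiableAt ℝ (fun y => B y i j) x) (X : ℝ × ℝ) :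
    dMat (fun y => B y * ctrans (B y)) x X =
      dMat B x X * ctrans (B x) + B x * ctrans (dMat B x X) := by
  refine Matrix.ext fun i j => ?_
  have h := ((fderiv_mul_conjA (hB i 0) (hB j 0)).add (fderiv_mul_conjA (hB i 1) (hB j 1))).fderiv
  have e : (fun y => (B y * ctrans (B y)) i j) =
      (fun y => B y i 0 * conjA (B y j 0)) + (fun y => B y i 1 * conjA (B y j 1)) := by
    funext y
    simp [ctrans, Matrix.mul_apply, Fin.sum_univ_two]
  have h2 : dMat (fun y => B y * ctrans (B y)) x X i j =
    fderiv ℝ (fun y => (B y * ctrans (B y)) i j) x X := rfl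
  rw [h2, e, h]
  have h3 : ∀ a, (ContinuousLinearEquiv.prodComm ℝ ℝ ℝ) a = conjA a := fun _ => rfl
  simp [ctrans, Matrix.mul_apply, Fin.sum_univ_two, dMat, -Prod.mk_add_mk, h3]
  ring

lemma dMat_eq {B : ℝ × ℝ → M2A} {x : ℝ × ℝ} {p q : LorentzA} (hdet : (B x).det = 1)
    (hu : (B x)⁻¹ * dMat B x (1, 0) = !![0, p; q, 0])
    (hv : (B x)⁻¹ * dMat B x (0, 1) = !![0, sA * p; sA * q, 0]) (X : ℝ × ℝ) :
    dMat B x X = B x * !![0, p * mkA X.1 X.2; q * mkA X.1 X.2, 0] := by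
  have hun : IsUnit (B x).det := by rw [hdet]; exact isUnit_one
  have e : dMat B x X = X.1 • dMat B x (1, 0) + X.2 • dMat B x (0, 1) := by
    refine Matrix.ext fun i j => ?_
    have hX : X = X.1 • ((1 : ℝ), (0 : ℝ)) + X.2 • ((0 : ℝ), (1 : ℝ)) := by ext <;> simp
    have := congrArg (fderiv ℝ (fun y => B y i j) x) hX
    rw [map_add, map_smul, map_smul] at this
    exact this
  have hu' := congrArg (fun M => B x * M) hu
  have hv' := congrArg (fun M => B x * M) hv
  simp only [Matrix.mul_nonsing_inv_cancel_left _ _ hun] at hu' hv'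
  rw [e, hu', hv', ← Matrix.mul_smul, ← Matrix.mul_smul, ← Matrix.mul_add]
  congr 1
  ext i j <;> fin_cases i <;> fin_cases j <;> simp [mkA, sA] <;> ring

lemma exists_basis (p q : LorentzA) (h : nsqA p ≠ nsqA q) :
    ∃ L : (ℝ × ℝ) ≃ₗ[ℝ] (ℝ × ℝ), ∀ X : ℝ × ℝ,
      (p * mkA (L X).1 (L X).2 + conjA q * conjA (mkA (L X).1 (L X).2)) *
        conjA (p * mkA (L X).1 (L X).2 + conjA q * conjA (mkA (L X).1 (L X).2)) =
      toA (X.1 ^ 2 - X.2 ^ 2) := by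
  obtain ⟨p1, p2⟩ := p
  obtain ⟨q1, q2⟩ := q
  simp only [nsqA] at h
  let M : (ℝ × ℝ) →ₗ[ℝ] (ℝ × ℝ) :=
    { toFun := fun X =>
        (((p1 * (X.1 + X.2) + q2 * (X.1 - X.2)) + (p2 * (X.1 - X.2) + q1 * (X.1 + X.2))) / 2,
         ((p1 * (X.1 + X.2) + q2 * (X.1 - X.2)) - (p2 * (X.1 - X.2) + q1 * (X.1 + X.2))) / 2)
      map_add' := by intro X Y; ext <;> simp <;> ring
      map_smul' := by intro c X; ext <;> simp <;> ring }
  have hM : Function.Injective M := by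
    rw [injective_iff_map_eq_zero]
    rintro ⟨a, b⟩ hab
    have h1 := congrArg Prod.fst hab
    have h2 := congrArg Prod.snd hab
    simp only [M, LinearMap.coe_mk, AddHom.coe_mk, Prod.fst_zero, Prod.snd_zero] at h1 h2
    have hd : p1 * p2 - q1 * q2 ≠ 0 := sub_ne_zero.mpr h
    have hs : a + b = 0 := by
      apply (mul_eq_zero.mp (?_ : (p1 * p2 - q1 * q2) * (a + b) = 0)).resolve_left hd
      linear_combination (p2 - q2) * h1 + (p2 + q2) * h2
    have ht : a - b = 0 := by
      apply (mul_eq_zero.mp (?_ : (p1 * p2 - q1 * q2) * (a - b) = 0)).resolve_left hd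
      linear_combination (p1 - q1) * h1 - (p1 + q1) * h2
    ext <;> simp <;> linarith
  refine ⟨(LinearEquiv.ofInjectiveEndo M hM).symm, fun X => ?_⟩
  obtain ⟨Y, rfl⟩ := (LinearEquiv.ofInjectiveEndo M hM).surjective X
  rw [LinearEquiv.symm_apply_apply, show LinearEquiv.ofInjectiveEndo M hM Y = M Y from rfl]
  ext <;> simp [M, mkA, conjA, toA] <;> ring

/-- Let `B : U → SL₂(𝒜)` be `C¹` with `B⁻¹dB = [[0, θ], [ω, 0]]` for
conformal 1-forms `θ = θ₀·da`, `ω = ω₀·da`.  Then `F = B·B*` takes values in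
`ℍ^{2,1} ≅ {C ∈ Herm₂(𝒜) : det C = 1}`; its differential is
`dF(X) = B·[[0, θ₀z + ω̂₀ẑ], [ω₀z + θ̂₀ẑ, 0]]·B*` with `-det dF(X) = |θ₀z + ω̂₀ẑ|²`
(the induced metric `(θ + ω̄)(ω + θ̄)`); and wherever `|θ₀|² ≠ |ω₀|²` this quadratic form is
nondegenerate of signature `(1,1)` (it is the standard form `X₁² - X₂²` in a suitable basis),
so `F` is a flat Lorentzian isometric immersion into `ℍ^{2,1}`. -/
theorem stmt16 (U : Set (ℝ × ℝ)) (hU : IsOpen U)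
    (B : ℝ × ℝ → M2A) (θ₀ ω₀ : ℝ × ℝ → LorentzA)
    (hB : ∀ i j, ContDiffOn ℝ 1 (fun x => B x i j) U)
    (hBsl : ∀ x ∈ U, (B x).det = 1)
    (hθ : ContDiffOn ℝ 1 θ₀ U) (hω : ContDiffOn ℝ 1 ω₀ U)
    (hθc : ∀ x ∈ U, Dahat θ₀ x = 0) (hωc : ∀ x ∈ U, Dahat ω₀ x = 0)
    (hu : ∀ x ∈ U, (B x)⁻¹ * dMat B x (1, 0) = !![0, θ₀ x; ω₀ x, 0])
    (hv : ∀ x ∈ U, (B x)⁻¹ * dMat B x (0, 1) = !![0, sA * θ₀ x; sA * ω₀ x, 0]) :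
    (∀ x ∈ U, B x * ctrans (B x) ∈ Herm2 ∧ (B x * ctrans (B x)).det = 1) ∧
    (∀ x ∈ U, ∀ X : ℝ × ℝ,
      dMat (fun y => B y * ctrans (B y)) x X =
        B x * !![0, θ₀ x * mkA X.1 X.2 + conjA (ω₀ x) * conjA (mkA X.1 X.2);
                 ω₀ x * mkA X.1 X.2 + conjA (θ₀ x) * conjA (mkA X.1 X.2), 0] * ctrans (B x) ∧
      -(dMat (fun y => B y * ctrans (B y)) x X).det =
        (θ₀ x * mkA X.1 X.2 + conjA (ω₀ x) * conjA (mkA X.1 X.2)) *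
          conjA (θ₀ x * mkA X.1 X.2 + conjA (ω₀ x) * conjA (mkA X.1 X.2))) ∧
    (∀ x ∈ U, nsqA (θ₀ x) ≠ nsqA (ω₀ x) →
      ∃ L : (ℝ × ℝ) ≃ₗ[ℝ] (ℝ × ℝ), ∀ X : ℝ × ℝ,
        -(dMat (fun y => B y * ctrans (B y)) x (L X)).det =
          toA (X.1 ^ 2 - X.2 ^ 2)) := by
  have hdiff : ∀ x ∈ U, ∀ i j, DifferentiableAt ℝ (fun y => B y i j) x := fun x hx i j =>
    ((hB i j).differentiableOn (by norm_num)).differentiableAt (hU.mem_nhds hx)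
  have hdet : ∀ x ∈ U, (ctrans (B x)).det = 1 := by
    intro x hx
    rw [det_ctrans, hBsl x hx]
    rfl
  have key : ∀ x ∈ U, ∀ X : ℝ × ℝ,
      dMat (fun y => B y * ctrans (B y)) x X =
        B x * !![0, θ₀ x * mkA X.1 X.2 + conjA (ω₀ x) * conjA (mkA X.1 X.2);
                 ω₀ x * mkA X.1 X.2 + conjA (θ₀ x) * conjA (mkA X.1 X.2), 0] *
          ctrans (B x) := by
    intro x hx X
    rw [dMat_mul_ctrans (hdiff x hx), dMat_eq (hBsl x hx) (hu x hx) (hv x hx), ctrans_mul,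
      ← Matrix.mul_assoc, ← Matrix.add_mul, ← Matrix.mul_add]
    congr 2
    ext i j <;> fin_cases i <;> fin_cases j <;> simp [ctrans, conjA]
  have key2 : ∀ x ∈ U, ∀ X : ℝ × ℝ,
      -(dMat (fun y => B y * ctrans (B y)) x X).det =
        (θ₀ x * mkA X.1 X.2 + conjA (ω₀ x) * conjA (mkA X.1 X.2)) *
          conjA (θ₀ x * mkA X.1 X.2 + conjA (ω₀ x) * conjA (mkA X.1 X.2)) := by
    intro x hx X
    rw [key x hx X, Matrix.det_mul, Matrix.det_mul, hdet x hx, hBsl x hx, Matrix.det_fin_two_of]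
    simp only [conjA_add, conjA_mul, conjA_conjA]
    ring
  refine ⟨fun x hx => ⟨?_, ?_⟩, fun x hx X => ⟨key x hx X, key2 x hx X⟩, fun x hx hne => ?_⟩
  · change _ = ctrans _
    rw [ctrans_mul, ctrans_ctrans]
  · rw [Matrix.det_mul, hdet x hx, hBsl x hx, one_mul]
  · obtain ⟨L, hL⟩ := exists_basis (θ₀ x) (ω₀ x) hne
    exact ⟨L, fun X => by rw [key2 x hx, hL]⟩
end
end

section
/- A C¹ map ψ : ℝ² → 𝒜, (u, v) ↦ ψ(u, v), satisfies the conformality equation ∂_v ψ = σ·∂_u ψ (equivalently ∂_â ψ = 0) if and only if there exist C¹ functions ψ₁, ψ₂ : ℝ → ℝ such that ψ(u, v) = ((1+σ)/2)·ψ₁(u+v) + ((1−σ)/2)·ψ₂(u−v) for all (u, v) ∈ ℝ². -/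
noncomputable section

lemma fst_eP (a b : ℝ) : (eP * toA a + eM * toA b) = (a, b) := by
  ext <;> simp [eP, eM, sA, toA]

lemma line_hasDeriv (ψ : ℝ × ℝ → LorentzA) (hψ : ContDiff ℝ 1 ψ) (x d : ℝ × ℝ) (s : ℝ) :
    HasDerivAt (fun s : ℝ => ψ (x + s • d)) (fderiv ℝ ψ (x + s • d) d) s := by
  have h1 : HasDerivAt (fun s : ℝ => x + s • d) d s := by
    simpa using ((hasDerivAt_id s).smul_const d).const_add x
  exact ((hψ.differentiable one_ne_zero) _).hasFDerivAt.comp_hasDerivAt s h1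

lemma line_fst (ψ : ℝ × ℝ → LorentzA) (hψ : ContDiff ℝ 1 ψ) (x d : ℝ × ℝ) (s : ℝ) :
    HasDerivAt (fun s : ℝ => (ψ (x + s • d)).1) (fderiv ℝ ψ (x + s • d) d).1 s :=
  (ContinuousLinearMap.fst ℝ ℝ ℝ).hasFDerivAt.comp_hasDerivAt s (line_hasDeriv ψ hψ x d s)

lemma line_snd (ψ : ℝ × ℝ → LorentzA) (hψ : ContDiff ℝ 1 ψ) (x d : ℝ × ℝ) (s : ℝ) :
    HasDerivAt (fun s : ℝ => (ψ (x + s • d)).2) (fderiv ℝ ψ (x + s • d) d).2 s :=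
  (ContinuousLinearMap.snd ℝ ℝ ℝ).hasFDerivAt.comp_hasDerivAt s (line_hasDeriv ψ hψ x d s)

lemma fderiv_split (ψ : ℝ × ℝ → LorentzA) (x : ℝ × ℝ) (a b : ℝ) :
    fderiv ℝ ψ x (a, b) = a • duA ψ x + b • dvA ψ x := by
  have : ((a, b) : ℝ × ℝ) = a • ((1, 0) : ℝ × ℝ) + b • ((0, 1) : ℝ × ℝ) := by simp
  rw [this, map_add, map_smul, map_smul]; rfl

/-- A `C¹` map `ψ : ℝ² → 𝒜` satisfies the conformality equation
`∂_v ψ = σ·∂_u ψ` (equivalently `∂_â ψ = 0`) if and only if there are `C¹` functions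
`ψ₁, ψ₂ : ℝ → ℝ` with `ψ(u,v) = ((1+σ)/2)·ψ₁(u+v) + ((1-σ)/2)·ψ₂(u-v)`. -/
theorem stmt18 (ψ : ℝ × ℝ → LorentzA) (hψ : ContDiff ℝ 1 ψ) :
    (∀ x, dvA ψ x = sA * duA ψ x) ↔
      ∃ ψ₁ ψ₂ : ℝ → ℝ, ContDiff ℝ 1 ψ₁ ∧ ContDiff ℝ 1 ψ₂ ∧
        ∀ u v : ℝ, ψ (u, v) = eP * toA (ψ₁ (u + v)) + eM * toA (ψ₂ (u - v)) := by
  constructor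
  · intro h
    refine ⟨fun t => (ψ (t, 0)).1, fun t => (ψ (t, 0)).2, by fun_prop, by fun_prop, ?_⟩
    intro u v
    rw [fst_eP]
    have d1 : ∀ s, HasDerivAt (fun s : ℝ => (ψ ((u + v, 0) + s • (-1, 1))).1) 0 s := by
      intro s
      have h1 := line_fst ψ hψ (u + v, 0) (-1, 1) s
      rw [fderiv_split, h] at h1
      simpa [sA] using h1
    have d2 : ∀ s, HasDerivAt (fun s : ℝ => (ψ ((u - v, 0) + s • (1, 1))).2) 0 s := by
      intro s
      have h1 := line_snd ψ hψ (u - v, 0) (1, 1) s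
      rw [fderiv_split, h] at h1
      simpa [sA] using h1
    have c1 := is_const_of_deriv_eq_zero (fun s => (d1 s).differentiableAt)
      (fun s => (d1 s).deriv) v 0
    have c2 := is_const_of_deriv_eq_zero (fun s => (d2 s).differentiableAt)
      (fun s => (d2 s).deriv) v 0
    ext
    · simpa using c1
    · simpa using c2
  · rintro ⟨ψ₁, ψ₂, -, -, h⟩ x
    have h1 := line_fst ψ hψ x (-1, 1) 0
    have h2 := line_snd ψ hψ x (1, 1) 0
    have e1 : (fun s : ℝ => (ψ (x + s • (-1, 1))).1) = fun _ => ψ₁ (x.1 + x.2) := by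
      funext s
      have := h (x.1 - s) (x.2 + s)
      rw [fst_eP] at this
      have hx : x + s • ((-1, 1) : ℝ × ℝ) = (x.1 - s, x.2 + s) := by
        ext <;> simp [sub_eq_add_neg]
      rw [hx, this]
      show ψ₁ _ = ψ₁ _
      congr 1
      ring
    have e2 : (fun s : ℝ => (ψ (x + s • (1, 1))).2) = fun _ => ψ₂ (x.1 - x.2) := by
      funext s
      have := h (x.1 + s) (x.2 + s)
      rw [fst_eP] at this
      have hx : x + s • ((1, 1) : ℝ × ℝ) = (x.1 + s, x.2 + s) := by
        ext <;> simp
      rw [hx, this]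
      show ψ₂ _ = ψ₂ _
      congr 1
      ring
    rw [e1] at h1
    rw [e2] at h2
    have k1 := h1.unique (hasDerivAt_const _ _)
    have k2 := h2.unique (hasDerivAt_const _ _)
    rw [fderiv_split] at k1 k2
    simp at k1 k2
    ext
    · simp [sA]; linarith
    · simp [sA]; linarith
end
end

section
/- Let B : ℝ² → M₂(𝒜) be a C¹ map each of whose entries is conformal (∂_â of each entry vanishes) and with det B(u,v) = 1 for all (u, v). Then there exist C¹ curves B₁, B₂ : ℝ → SL₂(ℝ) such that B(u, v) = ((1+σ)/2)·B₁(u+v) + ((1−σ)/2)·B₂(u−v) for all (u, v), and consequently B(u,v)·B(u,v)* = ((1+σ)/2)·B₁(u+v)·B₂(u−v)ᵗ + ((1−σ)/2)·B₂(u−v)·B₁(u+v)ᵗ; hence under the identification Herm₂(𝒜) ≅ M₂(ℝ) (C = ((1+σ)/2)C₁ + ((1−σ)/2)C₁ᵗ ↦ C₁), the map B·B* corresponds to (u, v) ↦ B₁(u+v)·B₂(u−v)ᵗ ∈ SL₂(ℝ): a flat Lorentzian surface in the Anti-de Sitter space ℍ^{2,1} ≅ SL₂(ℝ) is locally a product of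 two curves. -/
noncomputable section

lemma conf_aux (f : ℝ × ℝ → LorentzA) (hf : ContDiff ℝ 1 f) (h : ∀ x, Dahat f x = 0) (u v : ℝ) :
    (f (u, v)).1 = (f (u + v, 0)).1 ∧ (f (u, v)).2 = (f (u - v, 0)).2 := by
  have hd : Differentiable ℝ f := hf.differentiable (by norm_num)
  have key : ∀ x, (fderiv ℝ f x (1, 0)).1 = (fderiv ℝ f x (0, 1)).1 ∧
      (fderiv ℝ f x (1, 0)).2 = -(fderiv ℝ f x (0, 1)).2 := by
    intro x
    have h1 := h x
    unfold Dahat duA dvA sA at h1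
    have ha := congrArg Prod.fst h1
    have hb := congrArg Prod.snd h1
    simp at ha hb
    constructor <;> linarith
  have hline : ∀ c t : ℝ, HasDerivAt (fun s : ℝ => f (u + c * (v - s), s))
      (fderiv ℝ f (u + c * (v - t), t) (-c, 1)) t := by
    intro c t
    have hl : HasDerivAt (fun s : ℝ => ((u + c * (v - s), s) : ℝ × ℝ)) (-c, 1) t := by
      refine HasDerivAt.prodMk ?_ (hasDerivAt_id t)
      have := (((hasDerivAt_id t).const_sub v).const_mul c).const_add u
      simpa using this
    exact (hd _).hasFDerivAt.comp_hasDerivAt t hl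
  have hsplit : ∀ c x, fderiv ℝ f x (-c, 1) = (-c) • fderiv ℝ f x (1, 0) + fderiv ℝ f x (0, 1) := by
    intro c x
    rw [← map_smul, ← map_add]
    simp
  constructor
  · have hg : ∀ t, HasDerivAt (fun s : ℝ => (f (u + 1 * (v - s), s)).1) 0 t := by
      intro t
      have h2 := (hasFDerivAt_fst (𝕜 := ℝ)).comp_hasDerivAt t (hline 1 t)
      have h3 := (key (u + 1 * (v - t), t)).1
      have h4 : (ContinuousLinearMap.fst ℝ ℝ ℝ) (fderiv ℝ f (u + 1 * (v - t), t) (-1, 1)) = 0 := by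
        rw [hsplit, ContinuousLinearMap.coe_fst', Prod.fst_add, Prod.smul_fst, h3, smul_eq_mul]
        ring
      rw [h4] at h2
      exact h2
    have := is_const_of_deriv_eq_zero (fun t => (hg t).differentiableAt) (fun t => (hg t).deriv) v 0
    simpa using this
  · have hg : ∀ t, HasDerivAt (fun s : ℝ => (f (u + (-1) * (v - s), s)).2) 0 t := by
      intro t
      have h2 := (hasFDerivAt_snd (𝕜 := ℝ)).comp_hasDerivAt t (hline (-1) t)
      have h3 := (key (u + (-1) * (v - t), t)).2
      have h4 : (ContinuousLinearMap.snd ℝ ℝ ℝ) (fderiv ℝ f (u + (-1) * (v - t), t) (-(-1), 1)) = 0 := by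
        rw [hsplit, ContinuousLinearMap.coe_snd', Prod.snd_add, Prod.smul_snd, h3, smul_eq_mul]
        ring
      rw [h4] at h2
      exact h2
    have := is_const_of_deriv_eq_zero (fun t => (hg t).differentiableAt) (fun t => (hg t).deriv) v 0
    simpa [sub_eq_add_neg] using this

/-- Let `B : ℝ² → M₂(𝒜)` be `C¹` with conformal entries and `det B = 1`.
Then there are `C¹` curves `B₁, B₂ : ℝ → SL₂(ℝ)` with
`B(u,v) = ((1+σ)/2)·B₁(u+v) + ((1-σ)/2)·B₂(u-v)`, hence
`B·B* = ((1+σ)/2)·B₁(u+v)·B₂(u-v)ᵗ + ((1-σ)/2)·B₂(u-v)·B₁(u+v)ᵗ`; under the identification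
`Herm₂(𝒜) ≅ M₂(ℝ)` the map `B·B*` corresponds to `(u,v) ↦ B₁(u+v)·B₂(u-v)ᵗ ∈ SL₂(ℝ)`: a flat
Lorentzian surface in `ℍ^{2,1} ≅ SL₂(ℝ)` is locally a product of two curves. -/
theorem stmt19 (B : ℝ × ℝ → M2A)
    (hB : ∀ i j, ContDiff ℝ 1 (fun x => B x i j))
    (hconf : ∀ i j x, Dahat (fun y => B y i j) x = 0)
    (hdet : ∀ x, (B x).det = 1) :
    ∃ B₁ B₂ : ℝ → Matrix (Fin 2) (Fin 2) ℝ,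
      (∀ i j, ContDiff ℝ 1 fun t => B₁ t i j) ∧
      (∀ i j, ContDiff ℝ 1 fun t => B₂ t i j) ∧
      (∀ t, (B₁ t).det = 1) ∧ (∀ t, (B₂ t).det = 1) ∧
      (∀ u v : ℝ, B (u, v) = eP • mR (B₁ (u + v)) + eM • mR (B₂ (u - v))) ∧
      (∀ u v : ℝ, B (u, v) * ctrans (B (u, v)) =
        eP • mR (B₁ (u + v) * (B₂ (u - v)).transpose) +
          eM • mR (B₂ (u - v) * (B₁ (u + v)).transpose)) ∧
      (∀ u v : ℝ, (B₁ (u + v) * (B₂ (u - v)).transpose).det = 1) := by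
  have hc := fun i j => conf_aux _ (hB i j) (hconf i j)
  have hP : eP = (1, 0) := by unfold eP sA; ext <;> simp
  have hM : eM = (0, 1) := by unfold eM sA; ext <;> simp
  have hl : ContDiff ℝ 1 (fun t : ℝ => ((t, 0) : ℝ × ℝ)) := by fun_prop
  have hd1 : ∀ t : ℝ, (Matrix.of fun i j => (B (t, 0) i j).1 : Matrix (Fin 2) (Fin 2) ℝ).det = 1 := by
    intro t
    have := congrArg Prod.fst (hdet (t, 0))
    simpa [Matrix.det_fin_two] using this
  have hd2 : ∀ t : ℝ, (Matrix.of fun i j => (B (t, 0) i j).2 : Matrix (Fin 2) (Fin 2) ℝ).det = 1 := by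
    intro t
    have := congrArg Prod.snd (hdet (t, 0))
    simpa [Matrix.det_fin_two] using this
  refine ⟨fun t => Matrix.of fun i j => (B (t, 0) i j).1,
    fun t => Matrix.of fun i j => (B (t, 0) i j).2, ?_, ?_, hd1, hd2, ?_, ?_, ?_⟩
  · intro i j
    exact contDiff_fst.comp ((hB i j).comp hl)
  · intro i j
    exact contDiff_snd.comp ((hB i j).comp hl)
  · intro u v
    ext i j
    · simp [hP, hM, mR, toA, (hc i j u v).1]
    · simp [hP, hM, mR, toA, (hc i j u v).2]
  · intro u v
    ext i j
    · simp [hP, hM, mR, toA, ctrans, conjA, Matrix.mul_apply, Fin.sum_univ_two,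
        (hc _ _ u v).1, (hc _ _ u v).2]
    · simp [hP, hM, mR, toA, ctrans, conjA, Matrix.mul_apply, Fin.sum_univ_two,
        (hc _ _ u v).1, (hc _ _ u v).2]
  · intro u v
    rw [Matrix.det_mul, Matrix.det_transpose, hd1, hd2, one_mul]
end
end
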